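/- Finite-horizon weak submartingale optimality principle (main conclusion of Lemma 2.1): Suppose there exist α* ∈ A and, for every α ∈ A and every i ∈ {1,…,n}, real-valued integrable random variables (W_t^{α,i})_{t∈[0,T]}, a jointly measurable running-cost process F^{α,i} : [0,T] × Ω → ℝ with ∫_0^T e^{−ρu} E[|F_u^{α,i}|] du < ∞, and an integrable terminal-cost random variable G^{α,i}, such that, writing S_t^{α,i} := e^{−ρt} W_t^{α,i} + ∫_0^t e^{−ρu} F_u^{α,i} du and J^i(α) := E[∫_0^T e^{−ρu} F_u^{α,i} du + e^{−ρT} G^{α,i}], the following hold: (i) for every α, α′ ∈ A that agree in all coordinates except possibly the i-th, E[W_0^{α,i}] = E[W_0^{α′,i}]; (ii) for every α ∈ A, E[W_T^{α,i}] = E[G^{α,i}]; (iii) for every α ∈ A, the map t ↦ E[S_t^{α,i}] is well defined and nondecreasing on [0,T]; (iv) the map t ↦ E[S_t^{α*,i}] is constant on [0,T]. Then α* is a Nash equilibrium, i.e. for every i ∈ {1,…,n} and every α_i ∈ A_i one has J^i(α*) ≤ J^i((α_i, α*^{−i})), and moreover J^i(α*) = E[W_0^{α*,i}] for every i. -/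

import Mathlib

open MeasureTheory Set

/-- Finite-horizon weak submartingale optimality principle (Lemma 2.1, main conclusion). -/
theorem finite_horizon_weak_submartingale_optimality_principle
    {Ω : Type*} [MeasurableSpace Ω] (P : Measure Ω) [IsProbabilityMeasure P]
    (T ρ : ℝ) (hT : 0 < T) (hρ : 0 ≤ ρ)
    (n : ℕ) (hn : 1 ≤ n)
    (A : Fin n → Type*) (hA : ∀ i, Nonempty (A i))
    (αstar : ∀ i, A i)
    (W F : (∀ i, A i) → Fin n → ℝ → Ω → ℝ)
    (G : (∀ i, A i) → Fin n → Ω → ℝ)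
    (hWint : ∀ α i, ∀ t ∈ Icc (0 : ℝ) T, Integrable (W α i t) P)
    (hFmeas : ∀ α i, Measurable (Function.uncurry (F α i)))
    (hFint : ∀ α i,
      IntegrableOn (fun u => Real.exp (-ρ * u) * ∫ ω, |F α i u ω| ∂P) (Icc (0 : ℝ) T))
    (hGint : ∀ α i, Integrable (G α i) P)
    (S : (∀ i, A i) → Fin n → ℝ → Ω → ℝ)
    (hS : ∀ α i t ω, S α i t ω =
      Real.exp (-ρ * t) * W α i t ω + ∫ u in Icc (0 : ℝ) t, Real.exp (-ρ * u) * F α i u ω)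
    (J : Fin n → (∀ i, A i) → ℝ)
    (hJ : ∀ i α, J i α =
      ∫ ω, ((∫ u in Icc (0 : ℝ) T, Real.exp (-ρ * u) * F α i u ω)
        + Real.exp (-ρ * T) * G α i ω) ∂P)
    -- (i) E[W₀^{α,i}] does not depend on the i-th coordinate of α
    (h1 : ∀ i, ∀ α α' : ∀ j, A j, (∀ j, j ≠ i → α j = α' j) →
      ∫ ω, W α i 0 ω ∂P = ∫ ω, W α' i 0 ω ∂P)
    -- (ii) E[W_T^{α,i}] = E[G^{α,i}]
    (h2 : ∀ i α, ∫ ω, W α i T ω ∂P = ∫ ω, G α i ω ∂P)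
    -- (iii) t ↦ E[S_t^{α,i}] is well defined and nondecreasing on [0,T]
    (h3 : ∀ i α, (∀ t ∈ Icc (0 : ℝ) T, Integrable (S α i t) P) ∧
      MonotoneOn (fun t => ∫ ω, S α i t ω ∂P) (Icc (0 : ℝ) T))
    -- (iv) t ↦ E[S_t^{α*,i}] is constant on [0,T]
    (h4 : ∀ i, ∀ t ∈ Icc (0 : ℝ) T,
      ∫ ω, S αstar i t ω ∂P = ∫ ω, S αstar i 0 ω ∂P) :
    (∀ i, ∀ ai : A i, J i αstar ≤ J i (Function.update αstar i ai)) ∧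
    (∀ i, J i αstar = ∫ ω, W αstar i 0 ω ∂P) := by
  have hT' : T ∈ Icc (0 : ℝ) T := ⟨hT.le, le_refl T⟩
  have h0' : (0 : ℝ) ∈ Icc (0 : ℝ) T := ⟨le_refl 0, hT.le⟩
  have hJS : ∀ i α, J i α = ∫ ω, S α i T ω ∂P := by
    intro i α
    have hW : Integrable (fun ω => Real.exp (-ρ * T) * W α i T ω) P :=
      (hWint α i T hT').const_mul _
    have hG : Integrable (fun ω => Real.exp (-ρ * T) * G α i ω) P :=
      (hGint α i).const_mul _
    have hI : Integrable
        (fun ω => ∫ u in Icc (0 : ℝ) T, Real.exp (-ρ * u) * F α i u ω) P := by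
      refine (((h3 i α).1 T hT').sub hW).congr (Filter.Eventually.of_forall fun ω => ?_)
      simp only [Pi.sub_apply, hS]
      ring
    rw [hJ, integral_add hI hG]
    simp only [hS]
    rw [integral_add hW hI, integral_const_mul, integral_const_mul, h2]
    ring
  have hS0 : ∀ i α, ∫ ω, S α i 0 ω ∂P = ∫ ω, W α i 0 ω ∂P := by
    intro i α
    simp [hS]
  have hstar : ∀ i, J i αstar = ∫ ω, W αstar i 0 ω ∂P := fun i => by
    rw [hJS, h4 i T hT', hS0]
  refine ⟨fun i ai => ?_, hstar⟩
  rw [hstar, hJS, h1 i αstar (Function.update αstar i ai)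
    (fun j hj => (Function.update_of_ne hj _ _).symm), ← hS0]
  exact (h3 i _).2 h0' hT' hT.le
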